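/- There exists a constant β > 0, depending only on the instance μ (and the family b) and not on the allocation, with the following property: for every allocation N = (N_1,…,N_K) ∈ ℝ_{>0}^K with g(μ, N) = 0 and every nonempty B ⊆ {2,…,K} such that W_a(N_1, N_a) takes a common value I_B for all a ∈ B and W_a(N_1, N_a) > I_B for all a ∈ B̄^c, the fluid derivative of the common index, given explicitly by I_B' = (I_B·h(B) + h(N)) / ((N_1 + Σ_{a∈B} N_a)·h(B) + d_B^{-1}·h(N)), satisfies I_B' > β. -/

import Mathlib

open scoped BigOperators

/-- A single-parameter exponential family, given by the log-partition function `b`,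
smooth with positive second derivative on an open interval `Θ`, together with the
inverse `θof` of `b'` on the set of means `S = b'(Θ)`. -/
structure SPEF where
  Θ : Set ℝ
  Θ_isOpen : IsOpen Θ
  Θ_ordConnected : Set.OrdConnected Θ
  Θ_nonempty : Θ.Nonempty
  b : ℝ → ℝ
  b_smooth : ContDiffOn ℝ (⊤ : ℕ∞) b Θ
  b_conv : ∀ t ∈ Θ, 0 < iteratedDeriv 2 b t
  θof : ℝ → ℝ
  θof_mem : ∀ μ ∈ deriv b '' Θ, θof μ ∈ Θ
  θof_spec : ∀ μ ∈ deriv b '' Θ, deriv b (θof μ) = μ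

namespace SPEF

/-- The set of means of the family. -/
def S (F : SPEF) : Set ℝ := deriv F.b '' F.Θ

/-- KL divergence `d(μ, x)` between the members of the family with means `μ` and `x`. -/
noncomputable def d (F : SPEF) (μ x : ℝ) : ℝ :=
  (F.θof μ - F.θof x) * μ - F.b (F.θof μ) + F.b (F.θof x)

end SPEF

/-- A `K`-armed bandit instance with arm distributions in a fixed SPEF; arm `0`
(the paper's arm `1`) is the unique best arm. -/
structure Bandit (K : ℕ) [NeZero K] extends SPEF where
  two_le : 2 ≤ K
  μ : Fin K → ℝ
  μ_mem : ∀ a, μ a ∈ SPEF.S toSPEF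
  μ_best : ∀ a : Fin K, a ≠ 0 → μ a < μ 0

namespace Bandit

variable {K : ℕ} [NeZero K]

/-- KL divergence of the underlying family. -/
noncomputable def d (M : Bandit K) : ℝ → ℝ → ℝ := M.toSPEF.d

/-- The weighted mean `x_{1,a}(N₁, N_a)`. -/
noncomputable def x1 (M : Bandit K) (a : Fin K) (N1 Na : ℝ) : ℝ :=
  (N1 * M.μ 0 + Na * M.μ a) / (N1 + Na)

/-- The index `W_a(N₁, N_a)` of an arm `a ≠ 1`. -/
noncomputable def W (M : Bandit K) (a : Fin K) (N1 Na : ℝ) : ℝ :=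
  N1 * M.d (M.μ 0) (M.x1 a N1 Na) + Na * M.d (M.μ a) (M.x1 a N1 Na)

/-- The set `{2, …, K}` of suboptimal arms. -/
def alt (K : ℕ) [NeZero K] : Finset (Fin K) := Finset.univ.filter (fun a => a ≠ 0)

/-- The anchor function `g(μ, N)`. -/
noncomputable def g (M : Bandit K) (Nv : Fin K → ℝ) : ℝ :=
  (∑ a ∈ alt K, M.d (M.μ 0) (M.x1 a (Nv 0) (Nv a)) / M.d (M.μ a) (M.x1 a (Nv 0) (Nv a))) - 1

end Bandit

open Bandit

namespace Bandit

variable {K : ℕ} [NeZero K]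

/-- Partial derivative of the KL divergence `d` in its second argument. -/
noncomputable def d2 (M : Bandit K) (μv x : ℝ) : ℝ := deriv (fun y => M.d μv y) x

/-- The quantity `f(μ, a, N)`, the negative of the derivative of `g` w.r.t. `x_{1,a}`. -/
noncomputable def fq (M : Bandit K) (a : Fin K) (Nv : Fin K → ℝ) : ℝ :=
  (M.d (M.μ 0) (M.x1 a (Nv 0) (Nv a)) / M.d (M.μ a) (M.x1 a (Nv 0) (Nv a))) *
    (M.d2 (M.μ a) (M.x1 a (Nv 0) (Nv a)) / M.d (M.μ a) (M.x1 a (Nv 0) (Nv a)) -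
      M.d2 (M.μ 0) (M.x1 a (Nv 0) (Nv a)) / M.d (M.μ 0) (M.x1 a (Nv 0) (Nv a)))

/-- The quantity `h_a(μ, N₁, N_a) = f(μ, a, N)·N₁²·Δ_a/(N₁+N_a)²`. -/
noncomputable def hq (M : Bandit K) (a : Fin K) (Nv : Fin K → ℝ) : ℝ :=
  M.fq a Nv * ((Nv 0) ^ 2 * (M.μ 0 - M.μ a) / (Nv 0 + Nv a) ^ 2)

/-- The quantity `h(B) = Σ_{a∈B} h_a·d_{a,a}⁻¹`. -/
noncomputable def hB (M : Bandit K) (B : Finset (Fin K)) (Nv : Fin K → ℝ) : ℝ :=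
  ∑ a ∈ B, M.hq a Nv / M.d (M.μ a) (M.x1 a (Nv 0) (Nv a))

/-- The quantity `h(N) = Σ_{a∈B̄ᶜ} h_a·N_a`. -/
noncomputable def hN (M : Bandit K) (B : Finset (Fin K)) (Nv : Fin K → ℝ) : ℝ :=
  ∑ a ∈ alt K \ B, M.hq a Nv * Nv a

/-- The quantity `d_B = (Σ_{a∈B} d_{a,a}⁻¹)⁻¹`. -/
noncomputable def dB (M : Bandit K) (B : Finset (Fin K)) (Nv : Fin K → ℝ) : ℝ :=
  (∑ a ∈ B, (M.d (M.μ a) (M.x1 a (Nv 0) (Nv a)))⁻¹)⁻¹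

end Bandit

namespace SPEF

variable (F : SPEF)

lemma contDiffAt_b {t : ℝ} (ht : t ∈ F.Θ) : ContDiffAt ℝ (⊤ : ℕ∞) F.b t :=
  F.b_smooth.contDiffAt (F.Θ_isOpen.mem_nhds ht)

lemma contDiffOn_deriv : ContDiffOn ℝ (⊤ : ℕ∞) (deriv F.b) F.Θ :=
  F.b_smooth.deriv_of_isOpen F.Θ_isOpen (by simp)

lemma hasStrictDerivAt_deriv {t : ℝ} (ht : t ∈ F.Θ) :
    HasStrictDerivAt (deriv F.b) (iteratedDeriv 2 F.b t) t := by
  have h := (F.contDiffOn_deriv.contDiffAt (F.Θ_isOpen.mem_nhds ht)).hasStrictDerivAt (by simp)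
  rwa [iteratedDeriv_succ, iteratedDeriv_one]

lemma continuousOn_iteratedDeriv : ContinuousOn (iteratedDeriv 2 F.b) F.Θ := by
  have h := F.contDiffOn_deriv.continuousOn_deriv_of_isOpen F.Θ_isOpen (by simp)
  rwa [iteratedDeriv_succ, iteratedDeriv_one]

lemma strictMonoOn_deriv : StrictMonoOn (deriv F.b) F.Θ := by
  refine strictMonoOn_of_deriv_pos F.Θ_ordConnected.convex F.contDiffOn_deriv.continuousOn ?_
  intro t ht
  have ht' := interior_subset ht
  rw [(F.hasStrictDerivAt_deriv ht').hasDerivAt.deriv]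
  exact F.b_conv t ht'

lemma θof_deriv {t : ℝ} (ht : t ∈ F.Θ) : F.θof (deriv F.b t) = t := by
  have h : deriv F.b t ∈ deriv F.b '' F.Θ := ⟨t, ht, rfl⟩
  exact F.strictMonoOn_deriv.injOn (F.θof_mem _ h) ht (F.θof_spec _ h)

/-- The derivative of `θof`, i.e. the inverse variance as a function of the mean. -/
noncomputable def invVar (x : ℝ) : ℝ := (iteratedDeriv 2 F.b (F.θof x))⁻¹

lemma invVar_pos {x : ℝ} (hx : x ∈ F.S) : 0 < F.invVar x :=
  inv_pos.2 (F.b_conv _ (F.θof_mem _ hx))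

lemma hasDerivAt_θof {x : ℝ} (hx : x ∈ F.S) : HasDerivAt F.θof (F.invVar x) x := by
  have ht := F.θof_mem x hx
  have h := (F.hasStrictDerivAt_deriv ht).to_local_left_inverse (F.b_conv _ ht).ne'
    (g := F.θof) (by
      filter_upwards [F.Θ_isOpen.mem_nhds ht] with t ht using F.θof_deriv ht)
  rw [F.θof_spec x hx] at h
  exact h.hasDerivAt

lemma continuousOn_θof : ContinuousOn F.θof F.S :=
  fun _ hx => (F.hasDerivAt_θof hx).continuousAt.continuousWithinAt

lemma continuousOn_invVar : ContinuousOn F.invVar F.S :=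
  (F.continuousOn_iteratedDeriv.comp F.continuousOn_θof fun x hx => F.θof_mem x hx).inv₀
    fun x hx => (F.b_conv _ (F.θof_mem x hx)).ne'

lemma ordConnected_S : F.S.OrdConnected :=
  (F.Θ_ordConnected.isPreconnected.image _ F.contDiffOn_deriv.continuousOn).ordConnected

lemma hasDerivAt_d (m : ℝ) {x : ℝ} (hx : x ∈ F.S) :
    HasDerivAt (F.d m) ((x - m) * F.invVar x) x := by
  have hθ := F.hasDerivAt_θof hx
  have hb : HasDerivAt F.b x (F.θof x) := by
    have := ((F.contDiffAt_b (F.θof_mem x hx)).differentiableAt (by simp)).hasDerivAt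
    rwa [F.θof_spec x hx] at this
  exact ((((hθ.const_sub (F.θof m)).mul_const m).sub_const (F.b (F.θof m))).add
    (hb.comp x hθ)).congr_deriv (by ring)

lemma continuousOn_d (m : ℝ) : ContinuousOn (F.d m) F.S :=
  fun _ hx => (F.hasDerivAt_d m hx).continuousAt.continuousWithinAt

lemma d_self (m : ℝ) : F.d m m = 0 := by simp [d]

lemma d_pos_of_lt {m x : ℝ} (hm : m ∈ F.S) (hx : x ∈ F.S) (h : m < x) : 0 < F.d m x := by
  have hS : Set.Icc m x ⊆ F.S := F.ordConnected_S.out hm hx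
  have hmono : StrictMonoOn (F.d m) (Set.Icc m x) := by
    refine strictMonoOn_of_deriv_pos (convex_Icc m x) ((F.continuousOn_d m).mono hS) ?_
    intro y hy
    have hyS := hS (interior_subset hy)
    rw [interior_Icc] at hy
    rw [(F.hasDerivAt_d m hyS).deriv]
    exact mul_pos (sub_pos.2 hy.1) (F.invVar_pos hyS)
  simpa [F.d_self] using hmono (Set.left_mem_Icc.2 h.le) (Set.right_mem_Icc.2 h.le) h

lemma d_pos_of_gt {m x : ℝ} (hm : m ∈ F.S) (hx : x ∈ F.S) (h : x < m) : 0 < F.d m x := by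
  have hS : Set.Icc x m ⊆ F.S := F.ordConnected_S.out hx hm
  have hanti : StrictAntiOn (F.d m) (Set.Icc x m) := by
    refine strictAntiOn_of_deriv_neg (convex_Icc x m) ((F.continuousOn_d m).mono hS) ?_
    intro y hy
    have hyS := hS (interior_subset hy)
    rw [interior_Icc] at hy
    rw [(F.hasDerivAt_d m hyS).deriv]
    exact mul_neg_of_neg_of_pos (sub_neg.2 hy.2) (F.invVar_pos hyS)
  simpa [F.d_self] using hanti (Set.left_mem_Icc.2 h.le) (Set.right_mem_Icc.2 h.le) h

/-- The quantity `h_a` as a function of the weighted mean `x` of `m < M`. -/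
noncomputable def hFun (m M x : ℝ) : ℝ :=
  (F.d M x * ((x - m) * F.invVar x) / F.d m x ^ 2 + (M - x) * F.invVar x / F.d m x) *
    ((x - m) ^ 2 / (M - m))

lemma hFun_pos {m M x : ℝ} (hm : m ∈ F.S) (hM : M ∈ F.S) (hx : x ∈ Set.Ioo m M) :
    0 < F.hFun m M x := by
  have hxS : x ∈ F.S := F.ordConnected_S.out hm hM ⟨hx.1.le, hx.2.le⟩
  have h1 := F.d_pos_of_lt hm hxS hx.1
  have h2 := F.d_pos_of_gt hM hxS hx.2
  have h3 := F.invVar_pos hxS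
  have h4 := sub_pos.2 hx.1
  have h5 := sub_pos.2 hx.2
  have h6 := sub_pos.2 (hx.1.trans hx.2)
  unfold hFun
  positivity

/-- Uniform bounds over the weighted means `x` of `m < M` that are at least as far from `m`
as from `M`; the last two concern those `x` that also stay away from `M`. -/
lemma exists_bounds {m M : ℝ} (hm : m ∈ F.S) (hM : M ∈ F.S) (hlt : m < M) (k : ℝ) :
    ∃ c C : ℝ, 0 < c ∧ 0 < C ∧ ∀ x ∈ Set.Icc m M, F.d M x ≤ F.d m x →
      c ≤ F.d m x ∧ F.hFun m M x / F.d m x ≤ C ∧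
      (F.d m x ≤ k * F.d M x → c ≤ F.hFun m M x ∧ c * (x - m) ≤ M - x) := by
  have hS : Set.Icc m M ⊆ F.S := F.ordConnected_S.out hm hM
  have cm := (F.continuousOn_d m).mono hS
  have cM := (F.continuousOn_d M).mono hS
  have cv := F.continuousOn_invVar.mono hS
  set A : Set ℝ := {x ∈ Set.Icc m M | F.d M x ≤ F.d m x}
  have hAsub : A ⊆ Set.Icc m M := fun x hx => hx.1
  have hAc : IsCompact A :=
    isCompact_Icc.of_isClosed_subset (isClosed_Icc.isClosed_le cM cm) hAsub
  have hAgt : ∀ x ∈ A, m < x := by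
    rintro x ⟨hx, hle⟩
    refine lt_of_le_of_ne hx.1 fun h => ?_
    subst h
    have := F.d_pos_of_gt hM hm hlt
    rw [F.d_self] at hle
    linarith
  have hApos : ∀ x ∈ A, 0 < F.d m x := fun x hx => F.d_pos_of_lt hm (hS hx.1) (hAgt x hx)
  have cmA := cm.mono hAsub
  have cMA := cM.mono hAsub
  have cvA := cv.mono hAsub
  have ch : ContinuousOn (F.hFun m M) A := by
    unfold hFun
    refine ContinuousOn.mul (.add (.div (cMA.mul (.mul (by fun_prop) cvA)) (cmA.pow 2) ?_)
      (.div (.mul (by fun_prop) cvA) cmA ?_)) (by fun_prop)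
    · exact fun x hx => (pow_pos (hApos x hx) 2).ne'
    · exact fun x hx => (hApos x hx).ne'
  obtain ⟨c₁, hc₁, hd⟩ := hAc.exists_forall_le' cmA hApos
  obtain ⟨C, hC⟩ := hAc.bddAbove_image (ch.div cmA fun x hx => (hApos x hx).ne')
  set A' : Set ℝ := {x ∈ A | F.d m x ≤ k * F.d M x}
  have hA'sub : A' ⊆ A := fun x hx => hx.1
  have hA'c : IsCompact A' :=
    hAc.of_isClosed_subset
      (hAc.isClosed.isClosed_le cmA (continuousOn_const.mul cMA)) hA'sub
  have hA'lt : ∀ x ∈ A', x < M := by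
    rintro x ⟨hx, hle⟩
    refine lt_of_le_of_ne hx.1.2 fun h => ?_
    have := hApos x hx
    rw [h] at hle this
    rw [F.d_self, mul_zero] at hle
    linarith
  obtain ⟨c₂, hc₂, hh⟩ := hA'c.exists_forall_le' (ch.mono hA'sub)
    fun x hx => F.hFun_pos hm hM ⟨hAgt x hx.1, hA'lt x hx⟩
  obtain ⟨c₃, hc₃, hr⟩ := hA'c.exists_forall_le' (f := fun x => M - x) (by fun_prop)
    fun x hx => sub_pos.2 (hA'lt x hx)
  have hΔ := sub_pos.2 hlt
  refine ⟨min c₁ (min c₂ (c₃ / (M - m))), max C 1, by positivity, by positivity, ?_⟩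
  intro x hx hle
  have hxA : x ∈ A := ⟨hx, hle⟩
  refine ⟨(min_le_left _ _).trans (hd x hxA), (hC ⟨x, hxA, rfl⟩).trans (le_max_left _ _), ?_⟩
  intro hk
  have hxA' : x ∈ A' := ⟨hxA, hk⟩
  refine ⟨((min_le_right _ _).trans (min_le_left _ _)).trans (hh x hxA'), ?_⟩
  calc min c₁ (min c₂ (c₃ / (M - m))) * (x - m)
      ≤ c₃ / (M - m) * (M - m) :=
        mul_le_mul ((min_le_right _ _).trans (min_le_right _ _)) (by linarith [hx.2])
          (by linarith [hx.1]) (by positivity)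
    _ = c₃ := div_mul_cancel₀ _ hΔ.ne'
    _ ≤ M - x := hr x hxA'

end SPEF

namespace Bandit

variable {K : ℕ} [NeZero K] (M : Bandit K)

lemma mem_alt {a : Fin K} : a ∈ alt K ↔ a ≠ 0 := by simp [alt]

lemma x1_mem_Ioo {a : Fin K} (ha : a ≠ 0) {n₁ n : ℝ} (h₁ : 0 < n₁) (h : 0 < n) :
    M.x1 a n₁ n ∈ Set.Ioo (M.μ a) (M.μ 0) := by
  have hΔ := M.μ_best a ha
  have hs : 0 < n₁ + n := by positivity
  unfold x1
  constructor
  · rw [lt_div_iff₀ hs]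
    nlinarith
  · rw [div_lt_iff₀ hs]
    nlinarith

lemma d2_eq (m : ℝ) {x : ℝ} (hx : x ∈ M.S) : M.d2 m x = (x - m) * M.invVar x :=
  (M.hasDerivAt_d m hx).deriv

lemma x1_mem_S {a : Fin K} (ha : a ≠ 0) {n₁ n : ℝ} (h₁ : 0 < n₁) (h : 0 < n) :
    M.x1 a n₁ n ∈ M.S :=
  M.ordConnected_S.out (M.μ_mem a) (M.μ_mem 0) (Set.Ioo_subset_Icc_self (M.x1_mem_Ioo ha h₁ h))

lemma d_best_pos {a : Fin K} (ha : a ≠ 0) {n₁ n : ℝ} (h₁ : 0 < n₁) (h : 0 < n) :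
    0 < M.d (M.μ 0) (M.x1 a n₁ n) :=
  M.d_pos_of_gt (M.μ_mem 0) (M.x1_mem_S ha h₁ h) (M.x1_mem_Ioo ha h₁ h).2

lemma d_arm_pos {a : Fin K} (ha : a ≠ 0) {n₁ n : ℝ} (h₁ : 0 < n₁) (h : 0 < n) :
    0 < M.d (M.μ a) (M.x1 a n₁ n) :=
  M.d_pos_of_lt (M.μ_mem a) (M.x1_mem_S ha h₁ h) (M.x1_mem_Ioo ha h₁ h).1

lemma hq_eq {a : Fin K} (ha : a ≠ 0) {Nv : Fin K → ℝ} (hN : ∀ a, 0 < Nv a) :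
    M.hq a Nv = M.hFun (M.μ a) (M.μ 0) (M.x1 a (Nv 0) (Nv a)) := by
  have hS := M.x1_mem_S ha (hN 0) (hN a)
  have h1 := M.d_best_pos ha (hN 0) (hN a)
  have h2 := M.d_arm_pos ha (hN 0) (hN a)
  have hΔ := sub_pos.2 (M.μ_best a ha)
  have hs : 0 < Nv 0 + Nv a := add_pos (hN 0) (hN a)
  have hx : M.x1 a (Nv 0) (Nv a) - M.μ a = Nv 0 * (M.μ 0 - M.μ a) / (Nv 0 + Nv a) := by
    unfold x1
    field_simp
    ring
  have hw : Nv 0 ^ 2 * (M.μ 0 - M.μ a) / (Nv 0 + Nv a) ^ 2 =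
      (M.x1 a (Nv 0) (Nv a) - M.μ a) ^ 2 / (M.μ 0 - M.μ a) := by
    rw [hx]
    field_simp
  unfold hq fq SPEF.hFun
  rw [hw, M.d2_eq _ hS, M.d2_eq _ hS]
  change _ = (M.d _ _ * _ / M.d _ _ ^ 2 + _ / M.d _ _) * _
  congr 1
  field_simp
  ring

/-- Bounds, uniform over arms and allocations, for a suboptimal arm whose term in the anchor
function is at most `1`; the last two concern arms whose term is at least `1 / K`. -/
lemma exists_uniform_bounds : ∃ c C : ℝ, 0 < c ∧ 0 < C ∧
    ∀ Nv : Fin K → ℝ, (∀ a, 0 < Nv a) → ∀ a ≠ 0,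
      M.d (M.μ 0) (M.x1 a (Nv 0) (Nv a)) ≤ M.d (M.μ a) (M.x1 a (Nv 0) (Nv a)) →
      c ≤ M.d (M.μ a) (M.x1 a (Nv 0) (Nv a)) ∧
      M.hq a Nv / M.d (M.μ a) (M.x1 a (Nv 0) (Nv a)) ≤ C ∧
      (M.d (M.μ a) (M.x1 a (Nv 0) (Nv a)) ≤ K * M.d (M.μ 0) (M.x1 a (Nv 0) (Nv a)) →
        c ≤ M.hq a Nv ∧ c * Nv 0 ≤ Nv a) := by
  have key : ∀ a : Fin K, ∃ c C : ℝ, 0 < c ∧ 0 < C ∧ (a ≠ 0 →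
      ∀ x ∈ Set.Icc (M.μ a) (M.μ 0), M.d (M.μ 0) x ≤ M.d (M.μ a) x →
      c ≤ M.d (M.μ a) x ∧ M.hFun (M.μ a) (M.μ 0) x / M.d (M.μ a) x ≤ C ∧
      (M.d (M.μ a) x ≤ K * M.d (M.μ 0) x →
        c ≤ M.hFun (M.μ a) (M.μ 0) x ∧ c * (x - M.μ a) ≤ M.μ 0 - x)) := by
    intro a
    by_cases ha : a = 0
    · exact ⟨1, 1, one_pos, one_pos, fun h => absurd ha h⟩
    · obtain ⟨c, C, hc, hC, h⟩ := M.exists_bounds (M.μ_mem a) (M.μ_mem 0) (M.μ_best a ha) K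
      exact ⟨c, C, hc, hC, fun _ => h⟩
  choose c C hc hC h using key
  have hne : (Finset.univ : Finset (Fin K)).Nonempty := Finset.univ_nonempty
  refine ⟨Finset.univ.inf' hne c, Finset.univ.sup' hne C, ?_, ?_, ?_⟩
  · exact (Finset.lt_inf'_iff hne).2 fun a _ => hc a
  · exact (Finset.lt_sup'_iff hne).2 ⟨0, Finset.mem_univ _, hC 0⟩
  intro Nv hN a ha hle
  have hcle : Finset.univ.inf' hne c ≤ c a := Finset.inf'_le _ (Finset.mem_univ a)
  have hCle : C a ≤ Finset.univ.sup' hne C := Finset.le_sup' _ (Finset.mem_univ a)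
  obtain ⟨b₁, b₂, b₃⟩ :=
    h a ha _ (Set.Ioo_subset_Icc_self (M.x1_mem_Ioo ha (hN 0) (hN a))) hle
  rw [M.hq_eq ha hN]
  refine ⟨hcle.trans b₁, b₂.trans hCle, fun hk => ?_⟩
  obtain ⟨b₄, b₅⟩ := b₃ hk
  refine ⟨hcle.trans b₄, ?_⟩
  have hΔ := sub_pos.2 (M.μ_best a ha)
  have hs : 0 < Nv 0 + Nv a := add_pos (hN 0) (hN a)
  have hx : M.x1 a (Nv 0) (Nv a) - M.μ a = Nv 0 * ((M.μ 0 - M.μ a) / (Nv 0 + Nv a)) := by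
    unfold x1
    field_simp
    ring
  have hx' : M.μ 0 - M.x1 a (Nv 0) (Nv a) = Nv a * ((M.μ 0 - M.μ a) / (Nv 0 + Nv a)) := by
    unfold x1
    field_simp
    ring
  rw [hx, hx', ← mul_assoc] at b₅
  exact (mul_le_mul_of_nonneg_right hcle (hN 0).le).trans
    (le_of_mul_le_mul_right b₅ (div_pos hΔ hs))

end Bandit

/-- Lemma: the common minimal index grows at a uniformly positive rate:
the fluid derivative of the common index of the minimum-index set `B` exceeds a constant
`β > 0` depending only on the instance. -/
theorem statement_9 {K : ℕ} [NeZero K] (M : Bandit K) :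
    ∃ β : ℝ, 0 < β ∧
      ∀ Nv : Fin K → ℝ, (∀ a, 0 < Nv a) → M.g Nv = 0 →
      ∀ B : Finset (Fin K), B.Nonempty → B ⊆ alt K →
      ∀ IB : ℝ,
        (∀ a ∈ B, M.W a (Nv 0) (Nv a) = IB) →
        (∀ a ∈ alt K \ B, IB < M.W a (Nv 0) (Nv a)) →
        β <
          (IB * M.hB B Nv + M.hN B Nv) /
            ((Nv 0 + ∑ a ∈ B, Nv a) * M.hB B Nv + (M.dB B Nv)⁻¹ * M.hN B Nv) := by
  obtain ⟨c, C, hc, hC, bounds⟩ := M.exists_uniform_bounds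
  have hK : (0 : ℝ) < K := Nat.cast_pos.2 (NeZero.pos K)
  set D : ℝ := K / c + (1 / c ^ 2 + K * C / c ^ 2) with hD
  have hDpos : 0 < D := by positivity
  refine ⟨1 / (D + 1), by positivity, ?_⟩
  intro Nv hN hg B hBne hBsub IB hIB _
  have hB0 : ∀ a ∈ B, a ≠ 0 := fun a ha => mem_alt.1 (hBsub ha)
  have d1pos : ∀ a ≠ 0, 0 < M.d (M.μ 0) (M.x1 a (Nv 0) (Nv a)) :=
    fun a ha => M.d_best_pos ha (hN 0) (hN a)
  have dapos : ∀ a ≠ 0, 0 < M.d (M.μ a) (M.x1 a (Nv 0) (Nv a)) :=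
    fun a ha => M.d_arm_pos ha (hN 0) (hN a)
  have hqpos : ∀ a ≠ 0, 0 < M.hq a Nv := fun a ha => by
    rw [M.hq_eq ha hN]
    exact M.hFun_pos (M.μ_mem a) (M.μ_mem 0) (M.x1_mem_Ioo ha (hN 0) (hN a))
  have hsum : ∑ a ∈ alt K,
      M.d (M.μ 0) (M.x1 a (Nv 0) (Nv a)) / M.d (M.μ a) (M.x1 a (Nv 0) (Nv a)) = 1 :=
    sub_eq_zero.1 hg
  have hle : ∀ a ≠ 0,
      M.d (M.μ 0) (M.x1 a (Nv 0) (Nv a)) ≤ M.d (M.μ a) (M.x1 a (Nv 0) (Nv a)) := by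
    intro a ha
    rw [← div_le_one (dapos a ha), ← hsum]
    exact Finset.single_le_sum (f := fun a => M.d (M.μ 0) (M.x1 a (Nv 0) (Nv a)) /
        M.d (M.μ a) (M.x1 a (Nv 0) (Nv a)))
      (fun i hi => (div_pos (d1pos i (mem_alt.1 hi)) (dapos i (mem_alt.1 hi))).le) (mem_alt.2 ha)
  have hcard : ∀ s : Finset (Fin K), (s.card : ℝ) ≤ K := fun s => by
    exact_mod_cast (Finset.card_le_univ s).trans_eq (Fintype.card_fin K)
  obtain ⟨a₀, ha₀, hlarge⟩ : ∃ a ∈ alt K, 1 / (K : ℝ) ≤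
      M.d (M.μ 0) (M.x1 a (Nv 0) (Nv a)) / M.d (M.μ a) (M.x1 a (Nv 0) (Nv a)) := by
    by_contra! hsmall
    have hlt := Finset.sum_lt_sum_of_nonempty (hBne.mono hBsub) hsmall
    rw [hsum, Finset.sum_const, nsmul_eq_mul, mul_one_div, lt_div_iff₀ hK] at hlt
    linarith [hcard (alt K)]
  have ha₀' := mem_alt.1 ha₀
  obtain ⟨hq₀, hN₀⟩ := (bounds Nv hN a₀ ha₀' (hle a₀ ha₀')).2.2 (by
    rwa [div_le_div_iff₀ hK (dapos a₀ ha₀'), one_mul, mul_comm] at hlarge)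
  have hNI : ∀ a ∈ B, c * Nv a ≤ IB := by
    intro a ha
    have h0 := hB0 a ha
    have h1 := (bounds Nv hN a h0 (hle a h0)).1
    rw [← hIB a ha]
    unfold W
    nlinarith [mul_pos (hN 0) (d1pos a h0), hN a]
  have hIpos : 0 < IB := by
    obtain ⟨a, ha⟩ := hBne
    exact (mul_pos hc (hN a)).trans_le (hNI a ha)
  have hBpos : 0 < M.hB B Nv :=
    Finset.sum_pos (fun a ha => div_pos (hqpos a (hB0 a ha)) (dapos a (hB0 a ha))) hBne
  have hNnonneg : 0 ≤ M.hN B Nv := Finset.sum_nonneg fun a ha =>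
    (mul_pos (hqpos a (mem_alt.1 (Finset.mem_sdiff.1 ha).1)) (hN a)).le
  have sum_le : ∀ (f : Fin K → ℝ) (t : ℝ), 0 ≤ t → (∀ a ∈ B, f a ≤ t) →
      ∑ a ∈ B, f a ≤ K * t := fun f t ht hf => by
    have h := Finset.sum_le_card_nsmul B f t hf
    rw [nsmul_eq_mul] at h
    exact h.trans (mul_le_mul_of_nonneg_right (hcard B) ht)
  have hBle : M.hB B Nv ≤ K * C := sum_le _ C hC.le fun a ha =>
    (bounds Nv hN a (hB0 a ha) (hle a (hB0 a ha))).2.1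
  have hdB : (M.dB B Nv)⁻¹ ≤ K / c := by
    unfold dB
    rw [inv_inv, div_eq_mul_inv]
    exact sum_le _ _ (inv_pos.2 hc).le fun a ha =>
      inv_anti₀ hc (bounds Nv hN a (hB0 a ha) (hle a (hB0 a ha))).1
  have hdBpos : 0 ≤ (M.dB B Nv)⁻¹ := by
    unfold dB
    rw [inv_inv]
    exact Finset.sum_nonneg fun a ha => (inv_pos.2 (dapos a (hB0 a ha))).le
  have hNsum : ∑ a ∈ B, Nv a ≤ K / c * IB := by
    rw [div_mul_eq_mul_div, mul_div_assoc]
    exact sum_le _ _ (div_pos hIpos hc).le fun a ha => by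
      rw [le_div_iff₀ hc, mul_comm]
      exact hNI a ha
  have hNsum0 : 0 ≤ ∑ a ∈ B, Nv a := Finset.sum_nonneg fun a _ => (hN a).le
  have hnum : 0 < IB * M.hB B Nv + M.hN B Nv := by positivity
  have hfirst : Nv 0 * M.hB B Nv ≤
      (1 / c ^ 2 + K * C / c ^ 2) * (IB * M.hB B Nv + M.hN B Nv) := by
    have hIh : 0 ≤ IB * M.hB B Nv := by positivity
    have hu : 0 ≤ 1 / c ^ 2 := by positivity
    have hv : 0 ≤ K * C / c ^ 2 := by positivity
    by_cases haB : a₀ ∈ B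
    · have h : Nv 0 ≤ 1 / c ^ 2 * IB := by
        rw [one_div_mul_eq_div, le_div_iff₀ (by positivity)]
        nlinarith [hNI a₀ haB]
      have := mul_le_mul_of_nonneg_right h hBpos.le
      nlinarith [mul_nonneg hu hNnonneg, mul_nonneg hv hnum.le]
    · have h1 : M.hq a₀ Nv * Nv a₀ ≤ M.hN B Nv :=
        Finset.single_le_sum (f := fun a => M.hq a Nv * Nv a)
          (fun i hi => (mul_pos (hqpos i (mem_alt.1 (Finset.mem_sdiff.1 hi).1)) (hN i)).le)
          (Finset.mem_sdiff.2 ⟨ha₀, haB⟩)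
      have h2 : Nv 0 ≤ M.hN B Nv / c ^ 2 := by
        rw [le_div_iff₀ (by positivity)]
        nlinarith [mul_le_mul_of_nonneg_right hq₀ (hN a₀).le]
      have h3 : Nv 0 * M.hB B Nv ≤ K * C / c ^ 2 * M.hN B Nv := by
        calc Nv 0 * M.hB B Nv ≤ M.hN B Nv / c ^ 2 * (K * C) :=
              mul_le_mul h2 hBle hBpos.le (by positivity)
          _ = K * C / c ^ 2 * M.hN B Nv := by ring
      nlinarith [mul_nonneg hv hIh, mul_nonneg hu hnum.le]
  have hden : (Nv 0 + ∑ a ∈ B, Nv a) * M.hB B Nv + (M.dB B Nv)⁻¹ * M.hN B Nv ≤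
      D * (IB * M.hB B Nv + M.hN B Nv) := by
    have h1 := mul_le_mul_of_nonneg_right hNsum hBpos.le
    have h2 := mul_le_mul_of_nonneg_right hdB hNnonneg
    rw [hD]
    linarith
  have hdenpos : 0 < (Nv 0 + ∑ a ∈ B, Nv a) * M.hB B Nv + (M.dB B Nv)⁻¹ * M.hN B Nv := by
    have := hN 0
    positivity
  rw [div_lt_div_iff₀ (by positivity) hdenpos]
  linarith
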